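/- arXiv:2510.12261 — 2 statements merged into one kernel-verified Lean document; each statement's English description precedes it below -/
import Mathlib

section
/- One has σ = (−1)^{ℓ(r−1)/2} · (λ·C_1)² · (λ·C_2)² ⋯ (λ·C_ℓ)², where the product is over all 1 ≤ t ≤ ℓ. -/
/-!
Let `K` be a finite commutative ring of odd order with a primitive additive character, such as
`ℤ/r`. Regard matrices indexed by `ι → K` as operators on a tensor power indexed by `ι`. Then `C_t`
is the Fourier matrix `C` acting on the factor `t`, and `σ` is the tensor power of the permutation
matrix `N` of negation. Orthogonality of characters gives `C² = |K| • N`; as negation is a product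
of `(|K| - 1) / 2` transpositions, this determines `(det C)²`, and hence
`(λC)² = (-1)^((|K| - 1) / 2) • N`. The product over `t` is the tensor power of the right-hand side.
-/

theorem list_prod_map_mulSingle {ι : Type*} [DecidableEq ι] {M : ι → Type*} [∀ i, Monoid (M i)]
    {l : List ι} (hl : l.Nodup) (hmem : ∀ i, i ∈ l) (x : ∀ i, M i) :
    (l.map fun i => Pi.mulSingle i (x i)).prod = x := by
  funext i
  calc (l.map fun j => Pi.mulSingle j (x j)).prod i
      = (l.map fun j => Pi.mulSingle j (x j) i).prod := by
        simpa [Function.comp_def] using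
          map_list_prod (Pi.evalMonoidHom M i) (l.map fun j => Pi.mulSingle j (x j))
    _ = x i := by
        rw [List.prod_map_eq_pow_single i _ fun j hj _ => Pi.mulSingle_eq_of_ne hj.symm (x j),
          List.count_eq_one_of_mem hl (hmem i), pow_one, Pi.mulSingle_eq_same]

section PiKronecker

variable {ι R : Type*} [Fintype ι] [DecidableEq ι] [CommSemiring R]
  {n : ι → Type*} [∀ i, Fintype (n i)] [∀ i, DecidableEq (n i)]

/-- The Kronecker product of a finite family of square matrices, indexed by the dependent functions
on `ι`, as a homomorphism of monoids in the family. The operator that applies `A` to the factor `t`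
alone is its value at `Pi.mulSingle t A`. -/
def piKronecker :
    (∀ i, Matrix (n i) (n i) R) →* Matrix (∀ i, n i) (∀ i, n i) R where
  toFun A := .of fun η ξ => ∏ i, A i (η i) (ξ i)
  map_one' := by
    ext η ξ
    simp [Matrix.one_apply, Fintype.prod_ite_zero, funext_iff]
  map_mul' A B := by
    ext η ξ
    simp [Matrix.mul_apply, Fintype.prod_sum, Finset.prod_mul_distrib]

theorem piKronecker_apply (A : ∀ i, Matrix (n i) (n i) R) (η ξ : ∀ i, n i) :
    piKronecker A η ξ = ∏ i, A i (η i) (ξ i) :=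
  rfl

theorem piKronecker_mulSingle_apply (t : ι) (A : Matrix (n t) (n t) R) (η ξ : ∀ i, n i) :
    piKronecker (Pi.mulSingle t A) η ξ =
      if ∀ i, i ≠ t → η i = ξ i then A (η t) (ξ t) else 0 := by
  have off_factor (i : {i // i ≠ t}) :
      (Pi.mulSingle t A : ∀ i, Matrix (n i) (n i) R) i (η i) (ξ i) =
        if η i = ξ i then 1 else 0 := by
    rw [Pi.mulSingle_eq_of_ne i.2, Matrix.one_apply]
  rw [piKronecker_apply, Fintype.prod_eq_mul_prod_subtype_ne _ t, Pi.mulSingle_eq_same]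
  simp only [off_factor, Fintype.prod_ite_zero, Finset.prod_const_one, Subtype.forall,
    mul_ite, mul_one, mul_zero]

theorem piKronecker_mulSingle_smul (t : ι) (c : R) (A : Matrix (n t) (n t) R) :
    piKronecker (Pi.mulSingle t (c • A)) = c • piKronecker (Pi.mulSingle t A) := by
  ext η ξ
  simp only [piKronecker_mulSingle_apply, Matrix.smul_apply, smul_ite, smul_zero]

theorem piKronecker_smul (c : R) (A : ∀ i, Matrix (n i) (n i) R) :
    piKronecker (fun i => c • A i) = c ^ Fintype.card ι • piKronecker A := by
  ext η ξ
  simp only [piKronecker_apply, Matrix.smul_apply, smul_eq_mul, Finset.prod_mul_distrib,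
    Finset.prod_const, Finset.card_univ]

theorem list_prod_map_piKronecker_mulSingle {l : List ι} (hl : l.Nodup) (hmem : ∀ i, i ∈ l)
    (A : ∀ i, Matrix (n i) (n i) R) :
    (l.map fun i => piKronecker (Pi.mulSingle i (A i))).prod = piKronecker A := by
  conv_rhs => rw [← list_prod_map_mulSingle hl hmem A, map_list_prod, List.map_map]
  rfl

theorem piKronecker_permMatrix (e : ∀ i, Equiv.Perm (n i)) :
    piKronecker (fun i => (e i).permMatrix R) =
      Equiv.Perm.permMatrix R (Equiv.piCongrRight e) := by
  ext η ξ
  simp [piKronecker_apply, PEquiv.toMatrix_apply, Fintype.prod_ite_zero, funext_iff]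

end PiKronecker

theorem sign_neg_of_odd_card {G : Type*} [AddGroup G] [Fintype G] [DecidableEq G]
    (hG : Odd (Fintype.card G)) :
    Equiv.Perm.sign (Equiv.neg G) = (-1) ^ ((Fintype.card G - 1) / 2) := by
  have neg_eq_self (x : G) : -x = x ↔ x = 0 := by
    have two_nsmul_injective : Function.Injective fun x : G => 2 • x :=
      (Nat.Coprime.nsmul_right_bijective (by simpa using hG)).injective
    rw [neg_eq_iff_add_eq_zero, ← two_nsmul]
    exact two_nsmul_injective.eq_iff' (nsmul_zero 2)
  have card_fixedPoints : Fintype.card (Function.fixedPoints (Equiv.neg G)) = 1 := by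
    rw [Fintype.card_eq_one_iff]
    exact ⟨⟨0, neg_zero⟩, fun x => Subtype.ext ((neg_eq_self x).mp x.2)⟩
  have neg_sq : Equiv.neg G ^ 2 = 1 := by
    ext x
    simp [pow_two]
  rw [Equiv.Perm.sign_of_pow_two_eq_one neg_sq, card_fixedPoints]

theorem card_ne_zero_of_isPrimitive {K R : Type*} [CommRing K] [Fintype K] [CommRing R]
    [IsDomain R] {ψ : AddChar K R} (hψ : ψ.IsPrimitive) : (Fintype.card K : R) ≠ 0 := by
  classical
  -- Otherwise orthogonality makes the distinct characters `b ↦ ψ (a * b)` linearly dependent.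
  intro card_eq_zero
  have shifts_independent : LinearIndependent R fun a b => ψ.mulShift a b :=
    (linearIndependent_monoidHom (Multiplicative K) R).comp
      (fun a => (ψ.mulShift a).toMonoidHom)
      (AddChar.toMonoidHomEquiv.injective.comp (AddChar.to_mulShift_inj_of_isPrimitive hψ))
  have shifts_sum : ∑ a, (1 : R) • (fun b => ψ.mulShift a b) = 0 := by
    funext b
    simpa [card_eq_zero] using AddChar.sum_mulShift b hψ
  exact one_ne_zero (Fintype.linearIndependent_iff.mp shifts_independent _ shifts_sum 0)

section FourierMatrix

/-- The matrix of the Fourier transform on `K` with respect to the additive character `ψ`. -/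
def fourierMatrix {K R : Type*} [Ring K] [Monoid R] (ψ : AddChar K R) : Matrix K K R :=
  .of fun i j => ψ (i * j)

variable {K : Type*} [CommRing K] [Fintype K] [DecidableEq K]

theorem fourierMatrix_sq {R : Type*} [CommRing R] [IsDomain R] {ψ : AddChar K R}
    (hψ : ψ.IsPrimitive) :
    fourierMatrix ψ ^ 2 = (Fintype.card K : R) • (Equiv.neg K).permMatrix R := by
  ext i j
  calc (fourierMatrix ψ ^ 2) i j
      = ∑ x, ψ (x * (i + j)) := by
        simp [pow_two, Matrix.mul_apply, fourierMatrix, mul_add, AddChar.map_add_eq_mul, mul_comm]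
    _ = if i + j = 0 then (Fintype.card K : R) else 0 := by
        simpa using AddChar.sum_mulShift (i + j) hψ
    _ = ((Fintype.card K : R) • (Equiv.neg K).permMatrix R) i j := by
        simp [PEquiv.toMatrix_apply, neg_eq_iff_add_eq_zero]

theorem det_fourierMatrix_sq {R : Type*} [CommRing R] [IsDomain R] {ψ : AddChar K R}
    (hψ : ψ.IsPrimitive) (hK : Odd (Fintype.card K)) :
    (fourierMatrix ψ).det ^ 2 =
      (Fintype.card K : R) ^ Fintype.card K * (-1) ^ ((Fintype.card K - 1) / 2) := by
  rw [← Matrix.det_pow, fourierMatrix_sq hψ, Matrix.det_smul, Matrix.det_permutation,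
    sign_neg_of_odd_card hK]
  simp

theorem normalized_fourierMatrix_sq {𝔽 : Type*} [Field 𝔽] {ψ : AddChar K 𝔽}
    (hψ : ψ.IsPrimitive) (hK : Odd (Fintype.card K)) :
    (((-(Fintype.card K : 𝔽)) ^ ((Fintype.card K - 1) / 2) * (fourierMatrix ψ).det⁻¹) •
      fourierMatrix ψ) ^ 2 =
      (-1 : 𝔽) ^ ((Fintype.card K - 1) / 2) • (Equiv.neg K).permMatrix 𝔽 := by
  have card_ne_zero := card_ne_zero_of_isPrimitive hψ
  rw [smul_pow, fourierMatrix_sq hψ, smul_smul, mul_pow, inv_pow, det_fourierMatrix_sq hψ hK]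
  congr 1
  obtain ⟨k, hk⟩ := hK
  have half_card : (Fintype.card K - 1) / 2 = k := by omega
  have card_pow : (Fintype.card K : 𝔽) ^ Fintype.card K =
      ((Fintype.card K : 𝔽) ^ k) ^ 2 * Fintype.card K := by
    rw [← pow_mul, ← pow_succ, mul_comm k 2, ← hk]
  rw [half_card, card_pow, neg_pow]
  field_simp

end FourierMatrix

theorem weil_sigma_eq_prod_general {K : Type*} [CommRing K] [Fintype K] [DecidableEq K]
    {q : ℕ} (hK : Fintype.card K = q) (hq : Odd q)
    {𝔽 : Type*} [Field 𝔽] {ψ : AddChar K 𝔽} (hψ : ψ.IsPrimitive) {ℓ : ℕ}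
    (Cb : Matrix K K 𝔽) (hCb : ∀ i j, Cb i j = ψ (i * j))
    (lam : 𝔽) (hlam : lam = (-(q : 𝔽)) ^ ((q - 1) / 2) * Cb.det⁻¹)
    (C : Fin ℓ → Matrix (Fin ℓ → K) (Fin ℓ → K) 𝔽)
    (hC : ∀ t η ξ, C t η ξ = if ∀ i, i ≠ t → η i = ξ i then ψ (η t * ξ t) else 0)
    (σ : Matrix (Fin ℓ → K) (Fin ℓ → K) 𝔽)
    (hσ : ∀ η ξ, σ η ξ = if η = -ξ then 1 else 0) :
    σ = ((-1 : 𝔽) ^ (ℓ * ((q - 1) / 2))) •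
      ((List.finRange ℓ).map fun t => (lam • C t) ^ 2).prod := by
  subst hK
  obtain rfl : Cb = fourierMatrix ψ := Matrix.ext hCb
  set ε : 𝔽 := (-1) ^ ((Fintype.card K - 1) / 2) with hε
  have C_eq (t : Fin ℓ) : C t = piKronecker (Pi.mulSingle t (fourierMatrix ψ)) := by
    ext η ξ
    rw [hC, piKronecker_mulSingle_apply]
    congr
  have σ_eq : σ = piKronecker fun _ => (Equiv.neg K).permMatrix 𝔽 := by
    ext η ξ
    simp [hσ, piKronecker_permMatrix, PEquiv.toMatrix_apply, funext_iff, neg_eq_iff_eq_neg]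
  have factor_sq (t : Fin ℓ) : (lam • C t) ^ 2 =
      piKronecker (Pi.mulSingle t (ε • (Equiv.neg K).permMatrix 𝔽)) := by
    rw [C_eq, ← piKronecker_mulSingle_smul, ← map_pow, ← Pi.mulSingle_pow, hlam,
      normalized_fourierMatrix_sq hψ hq]
  have prod_eq : ((List.finRange ℓ).map fun t => (lam • C t) ^ 2).prod = ε ^ ℓ • σ := by
    simp only [factor_sq]
    rw [list_prod_map_piKronecker_mulSingle (List.nodup_finRange ℓ) List.mem_finRange,
      piKronecker_smul, Fintype.card_fin, σ_eq]
  have ε_mul_self : ε * ε = 1 := by rw [hε, ← mul_pow]; simp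
  rw [prod_eq, smul_smul, mul_comm ℓ, pow_mul, ← hε, ← mul_pow, ε_mul_self, one_pow, one_smul]

/-- `σ = (−1)^{ℓ(r−1)/2}·(λC_1)²⋯(λC_ℓ)²`. -/
theorem weil_sigma_eq_prod
    {r : ℕ} [Fact (Nat.Prime r)] (hr : Odd r)
    {𝔽 : Type*} [Field 𝔽] {θ : 𝔽} (hθ : IsPrimitiveRoot θ r)
    {ℓ : ℕ} (hℓ : 1 ≤ ℓ)
    (Cb : Matrix (ZMod r) (ZMod r) 𝔽)
    (hCb : ∀ i j : ZMod r, Cb i j = θ ^ (i * j).val)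
    (lam : 𝔽) (hlam : lam = (-(r : 𝔽)) ^ ((r - 1) / 2) * Cb.det⁻¹)
    (C : Fin ℓ → Matrix (Fin ℓ → ZMod r) (Fin ℓ → ZMod r) 𝔽)
    (hC : ∀ t η ξ, C t η ξ =
      if ∀ i, i ≠ t → η i = ξ i then θ ^ (η t * ξ t).val else 0)
    (σ : Matrix (Fin ℓ → ZMod r) (Fin ℓ → ZMod r) 𝔽)
    (hσ : ∀ η ξ, σ η ξ = if η = -ξ then 1 else 0) :
    σ = ((-1 : 𝔽) ^ (ℓ * ((r - 1) / 2))) •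
      ((List.finRange ℓ).map fun t => (lam • C t) ^ 2).prod :=
  weil_sigma_eq_prod_general (ZMod.card r) hr
    (AddChar.zmodChar_primitive_of_primitive_root r hθ) Cb hCb lam hlam C hC σ hσ
end

section
/- In the unit group of the matrix ring, G ⊓ (R ⊔ Z) = G ⊓ Z, where R ⊔ Z denotes the subgroup generated by R and Z. -/
/-!
A Weyl operator translates functions on a finite abelian group `V` and multiplies them by a
character; up to scalars these operators form a group, which contains `R` and `Z`. The generators
of `G` all commute with the parity operator `ξ ↦ -ξ`. Conjugation by parity inverts both the
character and the translation of a Weyl operator, so when `V` has odd order the only multiples of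
Weyl operators that commute with parity are the scalars.
-/

open Matrix

theorem mem_center_GL_iff_exists_smul_one {n K : Type*} [DecidableEq n] [Fintype n] [CommRing K]
    {x : GL n K} :
    x ∈ Subgroup.center (GL n K) ↔ ∃ c : Kˣ, x.val = c.val • (1 : Matrix n n K) := by
  rw [GeneralLinearGroup.center_eq_range_scalar]
  refine exists_congr fun c => ?_
  rw [← Units.val_inj, GeneralLinearGroup.coe_scalar, scalar_apply, smul_one_eq_diagonal, eq_comm]

section WeylOperators

variable {V K : Type*} [AddCommMonoid V] [DecidableEq V] [CommSemiring K]

/-- The Weyl operator on functions `V → K`, in the basis of indicator functions: multiplication by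
the character `χ` followed by translation by `b`. -/
def weylOperator (χ : AddChar V K) (b : V) : Matrix V V K :=
  of fun η ξ => if η = ξ + b then χ ξ else 0

theorem weylOperator_apply (χ : AddChar V K) (b η ξ : V) :
    weylOperator χ b η ξ = if η = ξ + b then χ ξ else 0 :=
  rfl

theorem weylOperator_zero_right (χ : AddChar V K) : weylOperator χ 0 = diagonal χ := by
  ext η ξ
  by_cases h : η = ξ <;> simp [weylOperator_apply, h]

theorem weylOperator_one_zero : weylOperator (1 : AddChar V K) 0 = 1 := by
  rw [weylOperator_zero_right]
  exact diagonal_one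

variable [Fintype V]

theorem weylOperator_mul_weylOperator (χ χ' : AddChar V K) (b b' : V) :
    weylOperator χ b * weylOperator χ' b' = χ b' • weylOperator (χ * χ') (b + b') := by
  ext η ξ
  rw [mul_apply, Finset.sum_eq_single (ξ + b')]
  · simp only [weylOperator_apply, Matrix.smul_apply, smul_eq_mul, AddChar.mul_apply,
      AddChar.map_add_eq_mul, add_assoc, add_comm b' b, if_true, ite_mul, mul_ite, zero_mul,
      mul_zero]
    congr 1
    ring
  · intro ζ _ hζ
    simp [weylOperator_apply, hζ]
  · simp

end WeylOperators

section WeylSubgroup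

variable {V K : Type*} [AddCommGroup V] [DecidableEq V] [Fintype V]

variable (V K) in
/-- The Heisenberg group of `V` enlarged by all scalars, realised as the group of multiples of Weyl
operators by units of `K`. -/
def weylSubgroup [CommSemiring K] : Subgroup (GL V K) where
  carrier := {x | ∃ (c : Kˣ) (χ : AddChar V K) (b : V), x.val = c.val • weylOperator χ b}
  one_mem' := ⟨1, 1, 0, by simp [weylOperator_one_zero]⟩
  mul_mem' := by
    rintro x y ⟨c, χ, b, hx⟩ ⟨c', χ', b', hy⟩
    refine ⟨c * c' * (χ.val_isUnit b').unit, χ * χ', b + b', ?_⟩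
    simp [hx, hy, weylOperator_mul_weylOperator, smul_smul, mul_assoc, mul_left_comm]
  inv_mem' := by
    rintro x ⟨c, χ, b, hx⟩
    refine ⟨(χ.val_isUnit b).unit * c⁻¹, χ⁻¹, -b, Units.inv_eq_of_mul_eq_one_right ?_⟩
    have hχ : χ b * χ (-b) = 1 := by rw [← AddChar.map_add_eq_mul]; simp
    simp [hx, weylOperator_mul_weylOperator, weylOperator_one_zero, smul_smul, mul_assoc, hχ]

theorem mem_weylSubgroup_of_val_eq_weylOperator [CommSemiring K] {x : GL V K} {χ : AddChar V K}
    {b : V} (hx : x.val = weylOperator χ b) : x ∈ weylSubgroup V K :=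
  ⟨1, χ, b, by simp [hx]⟩

theorem center_le_weylSubgroup [CommRing K] :
    Subgroup.center (GL V K) ≤ weylSubgroup V K := fun x hx => by
  obtain ⟨c, hc⟩ := mem_center_GL_iff_exists_smul_one.mp hx
  exact ⟨c, 1, 0, by rw [hc, weylOperator_one_zero]⟩

end WeylSubgroup

section Parity

variable {V K : Type*} [InvolutiveNeg V] [DecidableEq V] [Fintype V] [Semiring K]

variable (V K) in
/-- The parity operator on functions `V → K`, the permutation matrix of `ξ ↦ -ξ`. -/
def parityOperator : GL V K :=
  permMatrixHom.toHomUnits (Equiv.neg V)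

theorem mem_centralizer_parityOperator {x : GL V K} :
    x ∈ Subgroup.centralizer {parityOperator V K} ↔ ∀ η ξ, x.val (-η) (-ξ) = x.val η ξ := by
  have hcomm : x ∈ Subgroup.centralizer {parityOperator V K} ↔
      ∀ η ξ, x.val η (-ξ) = x.val (-η) ξ := by
    rw [Subgroup.mem_centralizer_singleton_iff, ← Units.val_inj, ← Matrix.ext_iff]
    simp [parityOperator, Equiv.Perm.inv_def, PEquiv.toMatrix_toPEquiv_mul,
      PEquiv.mul_toMatrix_toPEquiv]
  rw [hcomm]
  constructor <;> intro h η ξ <;> rw [← h, neg_neg]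

theorem mem_centralizer_parityOperator_of_val_eq_diagonal {x : GL V K} {f : V → K}
    (hx : x.val = diagonal f) (hf : f.Even) :
    x ∈ Subgroup.centralizer {parityOperator V K} :=
  mem_centralizer_parityOperator.mpr fun η ξ => by simp [hx, diagonal_apply, hf η]

end Parity

theorem eq_zero_of_neg_eq_self_of_odd_card {V : Type*} [AddGroup V]
    (hV : Odd (Nat.card V)) {b : V} (hb : -b = b) : b = 0 := by
  refine hV.coprime_two_right.nsmul_right_bijective.injective ?_
  simp only [two_nsmul, smul_zero]
  nth_rw 1 [← hb, neg_add_cancel]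

theorem addChar_eq_one_of_even_of_odd_card {V M : Type*} [AddGroup V] [Monoid M]
    (hV : Odd (Nat.card V)) {χ : AddChar V M} (hχ : Function.Even χ) : χ = 1 := by
  ext ξ
  obtain ⟨ζ, rfl⟩ := hV.coprime_two_right.nsmul_right_bijective.surjective ξ
  change χ (2 • ζ) = 1
  rw [two_nsmul, AddChar.map_add_eq_mul]
  nth_rw 1 [← hχ ζ]
  rw [← AddChar.map_add_eq_mul, neg_add_cancel, AddChar.map_zero_eq_one]

theorem centralizer_parityOperator_inf_weylSubgroup {V K : Type*} [AddCommGroup V]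
    [DecidableEq V] [Fintype V] [CommRing K] (hV : Odd (Nat.card V)) :
    Subgroup.centralizer {parityOperator V K} ⊓ weylSubgroup V K = Subgroup.center (GL V K) := by
  refine le_antisymm ?_ (le_inf (Subgroup.center_le_centralizer _) center_le_weylSubgroup)
  rintro x ⟨hxP, c, χ, b, hx⟩
  cases subsingleton_or_nontrivial K
  · rw [Subsingleton.elim x 1]
    exact one_mem _
  have hparity (η ξ : V) : weylOperator χ b (-η) (-ξ) = weylOperator χ b η ξ := by
    simpa [hx] using mem_centralizer_parityOperator.mp hxP η ξ
  have hb : b = 0 := by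
    refine eq_zero_of_neg_eq_self_of_odd_card hV (by_contra fun hb => ?_)
    simpa [weylOperator_apply, hb] using hparity b 0
  have hχ : χ = 1 := addChar_eq_one_of_even_of_odd_card hV fun ξ => by
    simpa [weylOperator_apply, hb] using hparity ξ ξ
  exact mem_center_GL_iff_exists_smul_one.mpr ⟨c, by rw [hx, hb, hχ, weylOperator_one_zero]⟩

theorem mul_add_div_two_modEq {r m n : ℕ} (h : m + n = r) :
    m * (m + r) / 2 ≡ n * (n + r) / 2 [MOD r] := by
  subst h
  have hm : m * (m + (m + n)) / 2 = m * m + m * n / 2 := by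
    rw [← Nat.mul_add_div two_pos]
    ring_nf
  have hn : n * (n + (m + n)) / 2 = n * n + m * n / 2 := by
    rw [← Nat.mul_add_div two_pos]
    ring_nf
  rw [hm, hn]
  refine Nat.ModEq.add_right _ ((Nat.modEq_iff_dvd).mpr ⟨n - m, ?_⟩)
  push_cast
  ring

theorem even_pow_val_mul_val_add_div_two {M : Type*} [Monoid M] {r : ℕ} [NeZero r] {θ : M}
    (hθ : θ ^ r = 1) : Function.Even fun z : ZMod r => θ ^ (z.val * (z.val + r) / 2) := by
  intro z
  obtain rfl | hz := eq_or_ne z 0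
  · rw [neg_zero]
  · refine pow_eq_pow_of_modEq (mul_add_div_two_modEq ?_) hθ
    rw [ZMod.neg_val, if_neg hz, Nat.sub_add_cancel z.val_le]

theorem eq_add_single_iff {ι M : Type*} [DecidableEq ι] [AddZeroClass M] {η ξ : ι → M} {t : ι}
    {a : M} : η = ξ + Pi.single t a ↔ η t = ξ t + a ∧ ∀ i, i ≠ t → η i = ξ i := by
  have h : ξ + Pi.single t a = Function.update ξ t (ξ t + a) := by
    ext i
    obtain rfl | hi := eq_or_ne i t <;> simp [*]
  rw [h, Function.eq_update_iff]

theorem weil_G_inf_RZ_general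
    {r : ℕ} [NeZero r] (hr : Odd r)
    {K : Type*} [CommRing K] {θ : K} (hθ : θ ^ r = 1)
    {ℓ : ℕ}
    (lam : K)
    (uA uB uC uU : Fin ℓ → (Matrix (Fin ℓ → ZMod r) (Fin ℓ → ZMod r) K)ˣ)
    (uD : Fin ℓ → Fin ℓ → (Matrix (Fin ℓ → ZMod r) (Fin ℓ → ZMod r) K)ˣ)
    (huA : ∀ t, (uA t : Matrix (Fin ℓ → ZMod r) (Fin ℓ → ZMod r) K)
      = Matrix.diagonal fun ξ => θ ^ (ξ t).val)
    (huB : ∀ t η ξ, (uB t : Matrix (Fin ℓ → ZMod r) (Fin ℓ → ZMod r) K) η ξ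
      = if η t = ξ t + 1 ∧ ∀ i, i ≠ t → η i = ξ i then 1 else 0)
    (huC : ∀ t, (uC t : Matrix (Fin ℓ → ZMod r) (Fin ℓ → ZMod r) K)
      = lam • Matrix.of fun η ξ =>
          if ∀ i, i ≠ t → η i = ξ i then θ ^ (η t * ξ t).val else 0)
    (huU : ∀ t, (uU t : Matrix (Fin ℓ → ZMod r) (Fin ℓ → ZMod r) K)
      = Matrix.diagonal fun ξ => θ ^ ((ξ t).val * ((ξ t).val + r) / 2))
    (huD : ∀ s t : Fin ℓ, s < t →
      (uD s t : Matrix (Fin ℓ → ZMod r) (Fin ℓ → ZMod r) K)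
        = Matrix.diagonal fun ξ => θ ^ (ξ s * ξ t).val)
    (G R Z : Subgroup (Matrix (Fin ℓ → ZMod r) (Fin ℓ → ZMod r) K)ˣ)
    (hG : G = Subgroup.closure (Set.range uC ∪ Set.range uU ∪
      {x | ∃ s t : Fin ℓ, s < t ∧ x = uD s t}))
    (hR : R = Subgroup.closure (Set.range uA ∪ Set.range uB))
    (hZ : ∀ x, x ∈ Z ↔ ∃ c : Kˣ,
      (x : Matrix (Fin ℓ → ZMod r) (Fin ℓ → ZMod r) K) = (c : K) • 1) :
    G ⊓ (R ⊔ Z) = G ⊓ Z := by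
  have hodd : Odd (Nat.card (Fin ℓ → ZMod r)) := by simpa using hr.pow
  have hcenter : Z = Subgroup.center _ := by
    ext x
    rw [hZ, mem_center_GL_iff_exists_smul_one]
  have hGP : G ≤ Subgroup.centralizer {parityOperator (Fin ℓ → ZMod r) K} := by
    rw [hG, Subgroup.closure_le]
    rintro x ((⟨t, rfl⟩ | ⟨t, rfl⟩) | ⟨s, t, hst, rfl⟩)
    · exact mem_centralizer_parityOperator.mpr fun η ξ => by simp [huC]
    · exact mem_centralizer_parityOperator_of_val_eq_diagonal (huU t) fun ξ =>
        even_pow_val_mul_val_add_div_two hθ (ξ t)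
    · exact mem_centralizer_parityOperator_of_val_eq_diagonal (huD s t hst) fun ξ => by simp
  have hRW : R ≤ weylSubgroup (Fin ℓ → ZMod r) K := by
    rw [hR, Subgroup.closure_le]
    rintro x (⟨t, rfl⟩ | ⟨t, rfl⟩)
    · let χ := (AddChar.zmodChar r hθ).compAddMonoidHom
        (Pi.evalAddMonoidHom (fun _ : Fin ℓ => ZMod r) t)
      exact mem_weylSubgroup_of_val_eq_weylOperator
        ((huA t).trans (weylOperator_zero_right χ).symm)
    · refine mem_weylSubgroup_of_val_eq_weylOperator (χ := 1) (b := Pi.single t 1) ?_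
      ext η ξ
      simp [huB, weylOperator_apply, eq_add_single_iff]
  refine le_antisymm (le_inf inf_le_left ?_) (inf_le_inf_left G le_sup_right)
  calc G ⊓ (R ⊔ Z)
      ≤ Subgroup.centralizer {parityOperator _ K} ⊓ weylSubgroup _ K :=
        inf_le_inf hGP (sup_le hRW (hcenter.le.trans center_le_weylSubgroup))
    _ = Z := by rw [centralizer_parityOperator_inf_weylSubgroup hodd, hcenter]

/-- `G ⊓ (R ⊔ Z) = G ⊓ Z`. -/
theorem weil_G_inf_RZ
    {r : ℕ} [Fact (Nat.Prime r)] (hr : Odd r)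
    {𝔽 : Type*} [Field 𝔽] {θ : 𝔽} (hθ : IsPrimitiveRoot θ r)
    {ℓ : ℕ} (hℓ : 1 ≤ ℓ)
    (Cb : Matrix (ZMod r) (ZMod r) 𝔽)
    (hCb : ∀ i j : ZMod r, Cb i j = θ ^ (i * j).val)
    (lam : 𝔽) (hlam : lam = (-(r : 𝔽)) ^ ((r - 1) / 2) * Cb.det⁻¹)
    (uA uB uC uU : Fin ℓ → (Matrix (Fin ℓ → ZMod r) (Fin ℓ → ZMod r) 𝔽)ˣ)
    (uD : Fin ℓ → Fin ℓ → (Matrix (Fin ℓ → ZMod r) (Fin ℓ → ZMod r) 𝔽)ˣ)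
    (huA : ∀ t, (uA t : Matrix (Fin ℓ → ZMod r) (Fin ℓ → ZMod r) 𝔽)
      = Matrix.diagonal fun ξ => θ ^ (ξ t).val)
    (huB : ∀ t η ξ, (uB t : Matrix (Fin ℓ → ZMod r) (Fin ℓ → ZMod r) 𝔽) η ξ
      = if η t = ξ t + 1 ∧ ∀ i, i ≠ t → η i = ξ i then 1 else 0)
    (huC : ∀ t, (uC t : Matrix (Fin ℓ → ZMod r) (Fin ℓ → ZMod r) 𝔽)
      = lam • Matrix.of fun η ξ =>
          if ∀ i, i ≠ t → η i = ξ i then θ ^ (η t * ξ t).val else 0)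
    (huU : ∀ t, (uU t : Matrix (Fin ℓ → ZMod r) (Fin ℓ → ZMod r) 𝔽)
      = Matrix.diagonal fun ξ => θ ^ ((ξ t).val * ((ξ t).val + r) / 2))
    (huD : ∀ s t : Fin ℓ, s < t →
      (uD s t : Matrix (Fin ℓ → ZMod r) (Fin ℓ → ZMod r) 𝔽)
        = Matrix.diagonal fun ξ => θ ^ (ξ s * ξ t).val)
    (G R Z : Subgroup (Matrix (Fin ℓ → ZMod r) (Fin ℓ → ZMod r) 𝔽)ˣ)
    (hG : G = Subgroup.closure (Set.range uC ∪ Set.range uU ∪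
      {x | ∃ s t : Fin ℓ, s < t ∧ x = uD s t}))
    (hR : R = Subgroup.closure (Set.range uA ∪ Set.range uB))
    (hZ : ∀ x, x ∈ Z ↔ ∃ c : 𝔽ˣ,
      (x : Matrix (Fin ℓ → ZMod r) (Fin ℓ → ZMod r) 𝔽) = (c : 𝔽) • 1) :
    G ⊓ (R ⊔ Z) = G ⊓ Z :=
  weil_G_inf_RZ_general hr hθ.pow_eq_one lam uA uB uC uU uD huA huB huC huU huD G R Z hG hR hZ
end
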